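/- arXiv:2511.22495 — 2 statements merged into one kernel-verified Lean document; each statement's English description precedes it below -/
import Mathlib

section
/- Every subalgebra of the crystal lattice C (including C itself) is simple: for each nonempty subset S of C closed under ∧, ∨, ¬, and ·, every equivalence relation on S compatible with the restricted operations is either the identity relation or the full relation on S. -/
/-- The universe of the crystal lattice `C`: six elements `⊥, t, a, b, f, ⊤`. -/
inductive Cry : Type
  | bot | t | a | b | f | top
  deriving DecidableEq

namespace Cry

/-- The lattice order of `C`: `⊥ < t < a < f < ⊤` and `t < b < f`, with `a, b` incomparable. -/
def leb : Cry → Cry → Bool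
  | bot, _ => true
  | _, top => true
  | t, bot => false
  | t, _ => true
  | a, a => true
  | a, f => true
  | a, _ => false
  | b, b => true
  | b, f => true
  | b, _ => false
  | f, f => true
  | f, _ => false
  | top, _ => false

/-- Meet: the only incomparable pair is `{a, b}`, whose meet is `t`. -/
def meet (x y : Cry) : Cry := if leb x y then x else if leb y x then y else t

/-- Join: the only incomparable pair is `{a, b}`, whose join is `f`. -/
def join (x y : Cry) : Cry := if leb x y then y else if leb y x then x else f

/-- The involution `¬`. -/
def neg : Cry → Cry
  | bot => top
  | t => f
  | a => a
  | b => b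
  | f => t
  | top => bot

/-- Fusion `·`: commutative with identity `t`; `⊥·x = ⊥`; `⊤·x = ⊤` for `x ≠ ⊥`;
`a·a = a`; `b·b = b`; and `a·b = a·f = b·f = f·f = ⊤`. -/
def fus : Cry → Cry → Cry
  | bot, _ => bot
  | _, bot => bot
  | top, _ => top
  | _, top => top
  | t, x => x
  | x, t => x
  | a, a => a
  | b, b => b
  | _, _ => top

/-- A subalgebra of `C`: a nonempty subset closed under `∧`, `∨`, `·`, and `¬`. -/
def IsSubalg (S : Set Cry) : Prop :=
  S.Nonempty ∧
  (∀ x ∈ S, ∀ y ∈ S, meet x y ∈ S ∧ join x y ∈ S ∧ fus x y ∈ S) ∧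
  (∀ x ∈ S, neg x ∈ S)

/-- A congruence on the subset `S` (with the operations inherited from `C`):
an equivalence relation on `S` compatible with `∧`, `∨`, `·`, and `¬`. -/
def IsCongOn (S : Set Cry) (r : Cry → Cry → Prop) : Prop :=
  (∀ x ∈ S, r x x) ∧
  (∀ x ∈ S, ∀ y ∈ S, r x y → r y x) ∧
  (∀ x ∈ S, ∀ y ∈ S, ∀ z ∈ S, r x y → r y z → r x z) ∧
  (∀ x ∈ S, ∀ y ∈ S, ∀ u ∈ S, ∀ v ∈ S, r x y → r u v →
      r (meet x u) (meet y v) ∧ r (join x u) (join y v) ∧ r (fus x u) (fus y v)) ∧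
  (∀ x ∈ S, ∀ y ∈ S, r x y → r (neg x) (neg y))

end Cry

/-!
If `x ≠ y` are congruent, then one of them, say `y`, is not below the other. Since `y ≤ x` holds
exactly when `y · ¬x ≤ f`, and `⊤` is the only element not below `f`, multiplying by `¬x` gives
`⊤ = y · ¬x ~ x · ¬x ≠ ⊤`. Negating, `⊥` is congruent to some `w ≠ ⊥`, and multiplying by `⊤`
gives `⊥ ~ ⊤`. Finally `z = z ∧ ⊤ ~ z ∧ ⊥ = ⊥` for every `z`.
-/

namespace Cry

theorem leb_refl (x : Cry) : leb x x := by
  cases x <;> rfl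

theorem leb_antisymm {x y : Cry} (hxy : leb x y) (hyx : leb y x) : x = y := by
  cases x <;> cases y <;> first | rfl | contradiction

theorem fus_neg_eq_top_iff_not_leb {x y : Cry} : fus x (neg y) = top ↔ ¬ leb x y := by
  cases x <;> cases y <;> decide

theorem fus_top_of_ne_bot {x : Cry} (hx : x ≠ bot) : fus x top = top := by
  cases x <;> first | rfl | contradiction

theorem meet_top (x : Cry) : meet x top = x := by
  cases x <;> rfl

theorem meet_bot (x : Cry) : meet x bot = bot := by
  cases x <;> rfl

theorem neg_eq_bot_iff {x : Cry} : neg x = bot ↔ x = top := by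
  cases x <;> decide

section Subalgebra

variable {S : Set Cry} {x y : Cry}

theorem IsSubalg.fus_mem (hS : IsSubalg S) (hx : x ∈ S) (hy : y ∈ S) : fus x y ∈ S :=
  (hS.2.1 x hx y hy).2.2

theorem IsSubalg.neg_mem (hS : IsSubalg S) (hx : x ∈ S) : neg x ∈ S :=
  hS.2.2 x hx

end Subalgebra

namespace IsCongOn

variable {S : Set Cry} {r : Cry → Cry → Prop} {x y z : Cry}

theorem refl (hr : IsCongOn S r) (hx : x ∈ S) : r x x :=
  hr.1 x hx

theorem symm (hr : IsCongOn S r) (hx : x ∈ S) (hy : y ∈ S) (hxy : r x y) : r y x :=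
  hr.2.1 x hx y hy hxy

theorem trans (hr : IsCongOn S r) (hx : x ∈ S) (hy : y ∈ S) (hz : z ∈ S)
    (hxy : r x y) (hyz : r y z) : r x z :=
  hr.2.2.1 x hx y hy z hz hxy hyz

theorem meet_congr_right (hr : IsCongOn S r) (hx : x ∈ S) (hy : y ∈ S) (hz : z ∈ S)
    (hxy : r x y) : r (meet z x) (meet z y) :=
  (hr.2.2.2.1 z hz z hz x hx y hy (hr.refl hz) hxy).1

theorem fus_congr_left (hr : IsCongOn S r) (hx : x ∈ S) (hy : y ∈ S) (hz : z ∈ S)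
    (hxy : r x y) : r (fus x z) (fus y z) :=
  (hr.2.2.2.1 x hx y hy z hz z hz hxy (hr.refl hz)).2.2

theorem neg_congr (hr : IsCongOn S r) (hx : x ∈ S) (hy : y ∈ S) (hxy : r x y) :
    r (neg x) (neg y) :=
  hr.2.2.2.2 x hx y hy hxy

theorem rel_of_rel_top_bot (hr : IsCongOn S r) (htop : top ∈ S) (hbot : bot ∈ S)
    (h : r top bot) (hx : x ∈ S) (hy : y ∈ S) : r x y := by
  have rel_bot {z : Cry} (hz : z ∈ S) : r z bot := by
    simpa only [meet_top, meet_bot] using hr.meet_congr_right htop hbot hz h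
  exact hr.trans hx hbot hy (rel_bot hx) (hr.symm hy hbot (rel_bot hy))

theorem rel_top_bot_of_rel_top (hr : IsCongOn S r) (hS : IsSubalg S) (htop : top ∈ S)
    (hx : x ∈ S) (hne : x ≠ top) (h : r x top) : r top bot := by
  have hneg : r (neg x) bot := hr.neg_congr hx htop h
  have hfus : r (fus (neg x) top) (fus bot top) :=
    hr.fus_congr_left (hS.neg_mem hx) (hS.neg_mem htop) htop hneg
  rwa [fus_top_of_ne_bot (neg_eq_bot_iff.not.mpr hne)] at hfus

theorem rel_of_rel_of_not_leb (hr : IsCongOn S r) (hS : IsSubalg S) (hx : x ∈ S) (hy : y ∈ S)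
    (hxy : r x y) (hle : ¬ leb y x) {u v : Cry} (hu : u ∈ S) (hv : v ∈ S) : r u v := by
  have hnx : neg x ∈ S := hS.neg_mem hx
  have hfus_top : fus y (neg x) = top := fus_neg_eq_top_iff_not_leb.mpr hle
  have hfus_ne_top : fus x (neg x) ≠ top :=
    fun h => fus_neg_eq_top_iff_not_leb.mp h (leb_refl x)
  have htop : top ∈ S := hfus_top ▸ hS.fus_mem hy hnx
  have hrel_top : r (fus x (neg x)) top := hfus_top ▸ hr.fus_congr_left hx hy hnx hxy
  have htop_bot : r top bot :=
    hr.rel_top_bot_of_rel_top hS htop (hS.fus_mem hx hnx) hfus_ne_top hrel_top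
  exact hr.rel_of_rel_top_bot htop (hS.neg_mem htop) htop_bot hu hv

theorem rel_of_rel_of_ne (hr : IsCongOn S r) (hS : IsSubalg S) (hx : x ∈ S) (hy : y ∈ S)
    (hxy : r x y) (hne : x ≠ y) {u v : Cry} (hu : u ∈ S) (hv : v ∈ S) : r u v := by
  by_cases hle : leb y x
  · have hle' : ¬ leb x y := fun h => hne (leb_antisymm h hle)
    exact hr.rel_of_rel_of_not_leb hS hy hx (hr.symm hx hy hxy) hle' hu hv
  · exact hr.rel_of_rel_of_not_leb hS hx hy hxy hle hu hv

end IsCongOn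

end Cry

/-- Every subalgebra of the crystal lattice `C` (including `C` itself) is simple. -/
theorem subalgebras_simple (S : Set Cry) (hS : Cry.IsSubalg S)
    (r : Cry → Cry → Prop) (hcong : Cry.IsCongOn S r) :
    (∀ x ∈ S, ∀ y ∈ S, r x y ↔ x = y) ∨ (∀ x ∈ S, ∀ y ∈ S, r x y) := by
  by_cases hid : ∀ x ∈ S, ∀ y ∈ S, r x y → x = y
  · exact .inl fun x hx y hy => ⟨hid x hx y hy, fun h => h ▸ hcong.refl hx⟩
  · push Not at hid
    obtain ⟨x, hx, y, hy, hxy, hne⟩ := hid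
    exact .inr fun u hu v hv => hcong.rel_of_rel_of_ne hS hx hy hxy hne hu hv
end

section
/- The crystal lattice C is extensible: whenever A and B are nontrivial (i.e., having more than one element) subalgebras of C and φ : A → B is an isomorphism (a bijection preserving ∧, ∨, ¬, and ·), there exists an automorphism of C whose restriction to A equals φ. -/
/-- An isomorphism from the subalgebra `A` onto the subalgebra `B`: a bijection of `A`
onto `B` preserving the restricted operations `∧`, `∨`, `·`, and `¬`. -/
def Cry.IsIso (A B : Set Cry) (φ : Cry → Cry) : Prop :=
  (∀ x ∈ A, φ x ∈ B) ∧
  (∀ x ∈ A, ∀ y ∈ A, φ x = φ y → x = y) ∧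
  (∀ y ∈ B, ∃ x ∈ A, φ x = y) ∧
  (∀ x ∈ A, ∀ y ∈ A, φ (Cry.meet x y) = Cry.meet (φ x) (φ y) ∧
      φ (Cry.join x y) = Cry.join (φ x) (φ y) ∧ φ (Cry.fus x y) = Cry.fus (φ x) (φ y)) ∧
  (∀ x ∈ A, φ (Cry.neg x) = Cry.neg (φ x))

/-!
Call `x` *self-dual* when `¬x = x`; the self-dual elements are `a` and `b`, and `a · b = ⊤`.
A nontrivial subalgebra contains `⊤` and `⊥`: it contains either an `x` with `¬x ≠ x`, and then
`(x ∨ ¬x) · (x ∨ ¬x) = ⊤`, or both `a` and `b`. A non-constant homomorphism into `C` is forced by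
the equations of `C` to fix `⊥`, `⊤`, `t` and `f`; it preserves self-duality, and it separates `a`
from `b` because self-dual elements are idempotent while `a · b = ⊤`. So it is the restriction
either of the identity or of the automorphism exchanging `a` and `b`.
-/

namespace Cry

instance : Fintype Cry where
  elems := {bot, t, a, b, f, top}
  complete x := by cases x <;> decide

theorem meet_comm : ∀ x y : Cry, meet x y = meet y x := by decide

theorem fus_eq_top_of_neg_eq_self_of_ne :
    ∀ {x y : Cry}, neg x = x → neg y = y → x ≠ y → fus x y = top := by decide

theorem fus_self_of_neg_eq_self : ∀ {x : Cry}, neg x = x → fus x x = x := by decide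

theorem fus_join_neg_self_of_neg_ne_self :
    ∀ {x : Cry}, neg x ≠ x → fus (join x (neg x)) (join x (neg x)) = top := by decide

theorem eq_bot_or_neg_eq_self_of_meet_neg_self :
    ∀ {x : Cry}, meet x (neg x) = x → fus (neg x) (neg x) = neg x → x = bot ∨ neg x = x := by
  decide

theorem eq_t_of_fus_neg :
    ∀ {x : Cry}, fus x (neg x) = neg x → fus (neg x) (neg x) = top → x = t := by decide

theorem eq_swap_of_neg_eq_self_of_ne :
    ∀ {x y : Cry}, neg x = x → neg y = y → x ≠ y → y = Equiv.swap a b x := by decide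

theorem swap_of_neg_ne_self : ∀ {x : Cry}, neg x ≠ x → Equiv.swap a b x = x := by decide

theorem swap_meet : ∀ x y : Cry,
    Equiv.swap a b (meet x y) = meet (Equiv.swap a b x) (Equiv.swap a b y) := by decide

theorem swap_join : ∀ x y : Cry,
    Equiv.swap a b (join x y) = join (Equiv.swap a b x) (Equiv.swap a b y) := by decide

theorem swap_fus : ∀ x y : Cry,
    Equiv.swap a b (fus x y) = fus (Equiv.swap a b x) (Equiv.swap a b y) := by decide

theorem swap_neg : ∀ x : Cry, Equiv.swap a b (neg x) = neg (Equiv.swap a b x) := by decide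

namespace IsSubalg

variable {A : Set Cry}

theorem join_mem (hA : IsSubalg A) {x y : Cry} (hx : x ∈ A) (hy : y ∈ A) : join x y ∈ A :=
  (hA.2.1 x hx y hy).2.1

theorem fus_mem_s11 (hA : IsSubalg A) {x y : Cry} (hx : x ∈ A) (hy : y ∈ A) : fus x y ∈ A :=
  (hA.2.1 x hx y hy).2.2

theorem neg_mem_s11 (hA : IsSubalg A) {x : Cry} (hx : x ∈ A) : neg x ∈ A := hA.2.2 x hx

theorem top_mem_of_neg_ne_self (hA : IsSubalg A) {x : Cry} (hx : x ∈ A) (h : neg x ≠ x) :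
    top ∈ A := by
  have hjoin : join x (neg x) ∈ A := hA.join_mem hx (hA.neg_mem_s11 hx)
  exact fus_join_neg_self_of_neg_ne_self h ▸ hA.fus_mem_s11 hjoin hjoin

theorem top_mem (hA : IsSubalg A) (hnt : A.Nontrivial) : top ∈ A := by
  obtain ⟨x, hx, y, hy, hxy⟩ := hnt
  by_cases hnx : neg x = x
  · by_cases hny : neg y = y
    · exact fus_eq_top_of_neg_eq_self_of_ne hnx hny hxy ▸ hA.fus_mem_s11 hx hy
    · exact hA.top_mem_of_neg_ne_self hy hny
  · exact hA.top_mem_of_neg_ne_self hx hnx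

theorem bot_mem (hA : IsSubalg A) (hnt : A.Nontrivial) : bot ∈ A := hA.neg_mem_s11 (hA.top_mem hnt)

end IsSubalg

/-- `φ` restricts to a homomorphism from the subalgebra `A` to `C`. Preservation of `∨` is not
listed, since `x ∨ y = ¬(¬x ∧ ¬y)`. -/
structure IsHomOn (A : Set Cry) (φ : Cry → Cry) : Prop where
  map_meet : ∀ {x y : Cry}, x ∈ A → y ∈ A → φ (meet x y) = meet (φ x) (φ y)
  map_fus : ∀ {x y : Cry}, x ∈ A → y ∈ A → φ (fus x y) = fus (φ x) (φ y)
  map_neg : ∀ {x : Cry}, x ∈ A → φ (neg x) = neg (φ x)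

theorem IsIso.isHomOn {A B : Set Cry} {φ : Cry → Cry} (hφ : IsIso A B φ) : IsHomOn A φ :=
  let ⟨_, _, _, hop, hneg⟩ := hφ
  ⟨fun hx hy => (hop _ hx _ hy).1, fun hx hy => (hop _ hx _ hy).2.2, fun hx => hneg _ hx⟩

theorem IsIso.injOn {A B : Set Cry} {φ : Cry → Cry} (hφ : IsIso A B φ) : Set.InjOn φ A :=
  fun x hx y hy => hφ.2.1 x hx y hy

namespace IsHomOn

variable {A : Set Cry} {φ : Cry → Cry} {x y : Cry}

theorem neg_map_eq_self (hφ : IsHomOn A φ) (hx : x ∈ A) (hnx : neg x = x) :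
    neg (φ x) = φ x := by
  rw [← hφ.map_neg hx, hnx]

theorem map_eq_map_bot_of_map_top_eq_map_bot (hφ : IsHomOn A φ) (hbot : bot ∈ A)
    (htop : top ∈ A) (h : φ top = φ bot) (hx : x ∈ A) : φ x = φ bot := by
  have meet_top : meet x top = x := by cases x <;> rfl
  calc
    φ x = meet (φ x) (φ top) := by rw [← hφ.map_meet hx htop, meet_top]
    _ = meet (φ bot) (φ x) := by rw [h, meet_comm]
    _ = φ bot := (hφ.map_meet hbot hx).symm

theorem map_bot (hφ : IsHomOn A φ) (hA : IsSubalg A) (hnc : (φ '' A).Nontrivial) :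
    φ bot = bot := by
  have hbot : bot ∈ A := hA.bot_mem (Set.nontrivial_of_image φ A hnc)
  have htop : top ∈ A := hA.top_mem (Set.nontrivial_of_image φ A hnc)
  have map_top_eq_neg : φ top = neg (φ bot) := hφ.map_neg hbot
  have meet_neg : meet (φ bot) (neg (φ bot)) = φ bot := by
    rw [← map_top_eq_neg]; exact (hφ.map_meet hbot htop).symm
  have fus_neg : fus (neg (φ bot)) (neg (φ bot)) = neg (φ bot) := by
    rw [← map_top_eq_neg]; exact (hφ.map_fus htop htop).symm
  refine (eq_bot_or_neg_eq_self_of_meet_neg_self meet_neg fus_neg).resolve_right fun hself => ?_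
  obtain ⟨_, ⟨x, hx, rfl⟩, _, ⟨y, hy, rfl⟩, hne⟩ := hnc
  have map_eq_map_bot {z : Cry} (hz : z ∈ A) : φ z = φ bot :=
    hφ.map_eq_map_bot_of_map_top_eq_map_bot hbot htop (map_top_eq_neg.trans hself) hz
  exact hne ((map_eq_map_bot hx).trans (map_eq_map_bot hy).symm)

theorem map_top (hφ : IsHomOn A φ) (hA : IsSubalg A) (hnc : (φ '' A).Nontrivial) :
    φ top = top := by
  have h : φ top = neg (φ bot) := hφ.map_neg (hA.bot_mem (Set.nontrivial_of_image φ A hnc))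
  rw [h, hφ.map_bot hA hnc, neg]

theorem map_t (hφ : IsHomOn A φ) (hA : IsSubalg A) (hnc : (φ '' A).Nontrivial)
    (ht : t ∈ A) : φ t = t := by
  have hf : f ∈ A := hA.neg_mem_s11 ht
  have map_f_eq_neg : φ f = neg (φ t) := hφ.map_neg ht
  apply eq_t_of_fus_neg
  · rw [← map_f_eq_neg]
    exact (hφ.map_fus ht hf).symm
  · rw [← map_f_eq_neg, ← hφ.map_fus hf hf]
    exact hφ.map_top hA hnc

theorem map_f (hφ : IsHomOn A φ) (hA : IsSubalg A) (hnc : (φ '' A).Nontrivial)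
    (hf : f ∈ A) : φ f = f := by
  have ht : t ∈ A := hA.neg_mem_s11 hf
  have h : φ f = neg (φ t) := hφ.map_neg ht
  rw [h, hφ.map_t hA hnc ht, neg]

theorem map_eq_self_of_neg_ne_self (hφ : IsHomOn A φ) (hA : IsSubalg A)
    (hnc : (φ '' A).Nontrivial) (hx : x ∈ A) (hnx : neg x ≠ x) : φ x = x := by
  cases x with
  | bot => exact hφ.map_bot hA hnc
  | t => exact hφ.map_t hA hnc hx
  | a => exact absurd rfl hnx
  | b => exact absurd rfl hnx
  | f => exact hφ.map_f hA hnc hx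
  | top => exact hφ.map_top hA hnc

theorem map_ne_map_of_neg_eq_self (hφ : IsHomOn A φ) (hA : IsSubalg A)
    (hnc : (φ '' A).Nontrivial) (hx : x ∈ A) (hy : y ∈ A) (hnx : neg x = x) (hny : neg y = y)
    (hxy : x ≠ y) : φ x ≠ φ y := by
  intro h
  have hnφx : neg (φ x) = φ x := hφ.neg_map_eq_self hx hnx
  have map_eq_top : φ x = top := calc
    φ x = fus (φ x) (φ y) := by rw [← h, fus_self_of_neg_eq_self hnφx]
    _ = φ top := by rw [← hφ.map_fus hx hy, fus_eq_top_of_neg_eq_self_of_ne hnx hny hxy]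
    _ = top := hφ.map_top hA hnc
  rw [map_eq_top] at hnφx
  exact absurd hnφx (by decide)

theorem map_eq_swap_of_map_ne_self (hφ : IsHomOn A φ) (hA : IsSubalg A)
    (hnc : (φ '' A).Nontrivial) (hx : x ∈ A) (hnx : neg x = x) (hne : φ x ≠ x) (hy : y ∈ A)
    (hny : neg y = y) : φ y = Equiv.swap a b y := by
  have hnφx : neg (φ x) = φ x := hφ.neg_map_eq_self hx hnx
  have map_x : φ x = Equiv.swap a b x := eq_swap_of_neg_eq_self_of_ne hnx hnφx hne.symm
  by_cases hxy : x = y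
  · rwa [← hxy]
  · have map_ne : φ x ≠ φ y := hφ.map_ne_map_of_neg_eq_self hA hnc hx hy hnx hny hxy
    calc
      φ y = Equiv.swap a b (φ x) :=
        eq_swap_of_neg_eq_self_of_ne hnφx (hφ.neg_map_eq_self hy hny) map_ne
      _ = Equiv.swap a b y := by rw [map_x, ← eq_swap_of_neg_eq_self_of_ne hnx hny hxy]

theorem eqOn_id_or_eqOn_swap (hφ : IsHomOn A φ) (hA : IsSubalg A)
    (hnc : (φ '' A).Nontrivial) : Set.EqOn id φ A ∨ Set.EqOn (Equiv.swap a b) φ A := by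
  by_cases hfix : ∀ x ∈ A, neg x = x → φ x = x
  · left
    intro x hx
    by_cases hnx : neg x = x
    · exact (hfix x hx hnx).symm
    · exact (hφ.map_eq_self_of_neg_ne_self hA hnc hx hnx).symm
  · right
    push Not at hfix
    obtain ⟨x, hx, hnx, hne⟩ := hfix
    intro y hy
    by_cases hny : neg y = y
    · exact (hφ.map_eq_swap_of_map_ne_self hA hnc hx hnx hne hy hny).symm
    · rw [swap_of_neg_ne_self hny, hφ.map_eq_self_of_neg_ne_self hA hnc hy hny]

end IsHomOn

end Cry

theorem crystal_extensible_general (A : Set Cry) (hA : Cry.IsSubalg A) (φ : Cry → Cry)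
    (hφ : Cry.IsHomOn A φ) (hnc : (φ '' A).Nontrivial) :
    ∃ ψ : Cry → Cry, Function.Bijective ψ ∧
      (∀ x y : Cry, ψ (Cry.meet x y) = Cry.meet (ψ x) (ψ y)) ∧
      (∀ x y : Cry, ψ (Cry.join x y) = Cry.join (ψ x) (ψ y)) ∧
      (∀ x y : Cry, ψ (Cry.fus x y) = Cry.fus (ψ x) (ψ y)) ∧
      (∀ x : Cry, ψ (Cry.neg x) = Cry.neg (ψ x)) ∧
      (∀ x ∈ A, ψ x = φ x) := by
  rcases hφ.eqOn_id_or_eqOn_swap hA hnc with hid | hswap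
  · exact ⟨id, Function.bijective_id, fun _ _ => rfl, fun _ _ => rfl, fun _ _ => rfl,
      fun _ => rfl, fun _ hx => hid hx⟩
  · exact ⟨Equiv.swap Cry.a Cry.b, (Equiv.swap Cry.a Cry.b).bijective, Cry.swap_meet, Cry.swap_join,
      Cry.swap_fus, Cry.swap_neg, fun _ hx => hswap hx⟩

/-- `C` is extensible: every isomorphism between nontrivial subalgebras of `C`
extends to an automorphism of `C`. -/
theorem crystal_extensible (A B : Set Cry) (hA : Cry.IsSubalg A) (hB : Cry.IsSubalg B)
    (hAnt : ∃ x ∈ A, ∃ y ∈ A, x ≠ y) (hBnt : ∃ x ∈ B, ∃ y ∈ B, x ≠ y)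
    (φ : Cry → Cry) (hφ : Cry.IsIso A B φ) :
    ∃ ψ : Cry → Cry, Function.Bijective ψ ∧
      (∀ x y : Cry, ψ (Cry.meet x y) = Cry.meet (ψ x) (ψ y)) ∧
      (∀ x y : Cry, ψ (Cry.join x y) = Cry.join (ψ x) (ψ y)) ∧
      (∀ x y : Cry, ψ (Cry.fus x y) = Cry.fus (ψ x) (ψ y)) ∧
      (∀ x : Cry, ψ (Cry.neg x) = Cry.neg (ψ x)) ∧
      (∀ x ∈ A, ψ x = φ x) := by
  exact crystal_extensible_general A hA φ hφ.isHomOn (Set.Nontrivial.image_of_injOn hAnt hφ.injOn)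
end
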